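/- There exists an instance of the information-acquisition game (a number of agents n, finite action sets B_i with costs c_i, finite signal sets S_i, a finite state set Θ with prior p, joint distributions P(·,·|b) whose agent-wise signal marginals depend only on that agent's own action, a principal action set A, a utility u, and a payment bound M) in which no uncorrelated mechanism is optimal: for every uncorrelated mechanism (γ, π), U°(γ, π) is strictly less than the maximum of U(μ, γ', π') over all incentive compatible correlated mechanisms (μ, γ', π'). -/

import Mathlib

open Finset

noncomputable section

variable {n : ℕ} {B S : Fin n → Type*} {Θ A : Type*}

/-- Expected payment of agent `i` under truthful behavior. -/
def Fpay [∀ i, Fintype (B i)] [∀ i, Fintype (S i)] [Fintype Θ]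
    (P : (∀ i, B i) → (∀ i, S i) → Θ → ℝ) (μ : (∀ i, B i) → ℝ)
    (γ : Fin n → (∀ i, B i) → (∀ i, S i) → Θ → ℝ) (i : Fin n) : ℝ :=
  ∑ b, ∑ s, ∑ θ, μ b * P b s θ * γ i b s θ

/-- Expected payment of agent `i` deviating via `(φ, ψ)` while the others are truthful. -/
def FpayDev [∀ i, Fintype (B i)] [∀ i, Fintype (S i)] [Fintype Θ]
    (P : (∀ i, B i) → (∀ i, S i) → Θ → ℝ) (μ : (∀ i, B i) → ℝ)
    (γ : Fin n → (∀ i, B i) → (∀ i, S i) → Θ → ℝ) (i : Fin n)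
    (φ : B i → B i) (ψ : B i → S i → S i) : ℝ :=
  ∑ b, ∑ s, ∑ θ, μ b * P (Function.update b i (φ (b i))) s θ *
      γ i b (Function.update s i (ψ (b i) (s i))) θ

/-- Incentive compatibility of a correlated mechanism. -/
def IC [∀ i, Fintype (B i)] [∀ i, Fintype (S i)] [Fintype Θ]
    (c : ∀ i, B i → ℝ) (P : (∀ i, B i) → (∀ i, S i) → Θ → ℝ)
    (μ : (∀ i, B i) → ℝ)
    (γ : Fin n → (∀ i, B i) → (∀ i, S i) → Θ → ℝ) : Prop :=
  ∀ (i : Fin n) (φ : B i → B i) (ψ : B i → S i → S i),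
    Fpay P μ γ i - FpayDev P μ γ i φ ψ ≥ ∑ b, μ b * (c i (b i) - c i (φ (b i)))

/-- Principal's expected utility of a correlated mechanism. -/
def Util [∀ i, Fintype (B i)] [∀ i, Fintype (S i)] [Fintype Θ] [Fintype A]
    (P : (∀ i, B i) → (∀ i, S i) → Θ → ℝ) (u : A → Θ → ℝ)
    (μ : (∀ i, B i) → ℝ)
    (γ : Fin n → (∀ i, B i) → (∀ i, S i) → Θ → ℝ)
    (π : (∀ i, B i) → (∀ i, S i) → A → ℝ) : ℝ :=
  (∑ b, ∑ s, ∑ θ, μ b * P b s θ * ∑ a, π b s a * u a θ) - ∑ i, Fpay P μ γ i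

/-- Validity of a correlated mechanism (distributions and payment bounds). -/
def IsMech [∀ i, Fintype (B i)] [Fintype A] (M : ℝ)
    (μ : (∀ i, B i) → ℝ)
    (γ : Fin n → (∀ i, B i) → (∀ i, S i) → Θ → ℝ)
    (π : (∀ i, B i) → (∀ i, S i) → A → ℝ) : Prop :=
  (∀ b, 0 ≤ μ b) ∧ (∑ b, μ b) = 1 ∧
  (∀ i b s θ, γ i b s θ ∈ Set.Icc (0:ℝ) M) ∧
  (∀ b s a, 0 ≤ π b s a) ∧ (∀ b s, ∑ a, π b s a = 1)

/-- `f_i(x_i | b_i, b'_i, s_i, s'_i, ζ)`. -/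
def fLP [∀ i, Fintype (B i)] [∀ i, DecidableEq (B i)]
    [∀ i, Fintype (S i)] [∀ i, DecidableEq (S i)] [Fintype Θ]
    (i : Fin n) (x : (∀ j, B j) → (∀ j, S j) → Θ → ℝ)
    (bi bi' : B i) (si si' : S i)
    (ζ : (∀ j, B j) → (∀ j, S j) → Θ → ℝ) : ℝ :=
  ∑ b, ∑ s, ∑ θ,
    if b i = bi' ∧ s i = si then
      x (Function.update b i bi) (Function.update s i si') θ * ζ b s θ
    else 0

/-- Feasibility for `LP(ζ, Λ, ε)`. -/
def LPfeasible [∀ i, Fintype (B i)] [∀ i, DecidableEq (B i)]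
    [∀ i, Fintype (S i)] [∀ i, DecidableEq (S i)] [Fintype Θ] [Fintype A]
    (M : ℝ)
    (ζ : (∀ j, B j) → (∀ j, S j) → Θ → ℝ)
    (Λ : ∀ i, B i → B i → ℝ) (ε : ℝ)
    (x : Fin n → (∀ j, B j) → (∀ j, S j) → Θ → ℝ)
    (y : (∀ j, B j) → (∀ j, S j) → A → ℝ)
    (z : ∀ i, B i → B i → S i → ℝ)
    (μ : (∀ j, B j) → ℝ) : Prop :=
  (∀ i b s θ, 0 ≤ x i b s θ) ∧
  (∀ b s a, 0 ≤ y b s a) ∧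
  (∀ i (bi bi' : B i) si, 0 ≤ z i bi bi' si) ∧
  (∀ b, 0 ≤ μ b) ∧ (∑ b, μ b) = 1 ∧
  (∀ (i : Fin n) (bi bi' : B i),
    (∑ si, (fLP i (x i) bi bi si si ζ - z i bi bi' si)) ≥
      (∑ b, if b i = bi then μ b * Λ i bi bi' else 0) - ε) ∧
  (∀ (i : Fin n) (bi bi' : B i) (si si' : S i),
    z i bi bi' si ≥ fLP i (x i) bi bi' si si' ζ) ∧
  (∀ b s, (∑ a, y b s a) = μ b) ∧
  (∀ i b s θ, x i b s θ ≤ M * μ b)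

/-- Objective of `LP(ζ, Λ, ε)`. -/
def LPobj [∀ i, Fintype (B i)] [∀ i, Fintype (S i)] [Fintype Θ] [Fintype A]
    (u : A → Θ → ℝ)
    (ζ : (∀ j, B j) → (∀ j, S j) → Θ → ℝ)
    (x : Fin n → (∀ j, B j) → (∀ j, S j) → Θ → ℝ)
    (y : (∀ j, B j) → (∀ j, S j) → A → ℝ) : ℝ :=
  ∑ b, ∑ s, ∑ θ,
    ((∑ a, y b s a * ζ b s θ * u a θ) - ∑ i, x i b s θ * ζ b s θ)

/-- A (bundled) instance of the information-acquisition game. -/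
structure AcqGame where
  n : ℕ
  B : Fin n → Type
  S : Fin n → Type
  Θ : Type
  A : Type
  [fB : ∀ i, Fintype (B i)]
  [dB : ∀ i, DecidableEq (B i)]
  [fS : ∀ i, Fintype (S i)]
  [dS : ∀ i, DecidableEq (S i)]
  [fΘ : Fintype Θ]
  [fA : Fintype A]
  c : ∀ i, B i → ℝ
  p : Θ → ℝ
  P : (∀ i, B i) → (∀ i, S i) → Θ → ℝ
  /-- marginal distribution `P^{(i)}(s_i, θ | b_i)` of agent `i`'s signal and the state -/
  Pm : ∀ i, B i → S i → Θ → ℝ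
  u : A → Θ → ℝ
  M : ℝ
  hM : 0 < M
  hc : ∀ i bi, c i bi ∈ Set.Icc (0:ℝ) 1
  hu : ∀ a θ, u a θ ∈ Set.Icc (0:ℝ) 1
  hp0 : ∀ θ, 0 ≤ p θ
  hp1 : (∑ θ, p θ) = 1
  hP0 : ∀ b s θ, 0 ≤ P b s θ
  hPp : ∀ b θ, (∑ s, P b s θ) = p θ
  /-- agent `i`'s signal marginal depends only on her own action `b i` -/
  hPm : ∀ (i : Fin n) (b : ∀ j, B j) (si : S i) (θ : Θ),
    (∑ s, if s i = si then P b s θ else 0) = Pm i (b i) si θ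

attribute [instance] AcqGame.fB AcqGame.dB AcqGame.fS AcqGame.dS AcqGame.fΘ AcqGame.fA

/-- `(bi, φ)` is a best response of agent `i` to the uncorrelated scoring rule `γ`. -/
def AcqGame.IsBR (G : AcqGame) (i : Fin G.n) (γ : G.S i → G.Θ → ℝ)
    (bi : G.B i) (φ : G.S i → G.S i) : Prop :=
  ∀ (bi' : G.B i) (φ' : G.S i → G.S i),
    (∑ s, ∑ θ, G.Pm i bi s θ * γ (φ s) θ) - G.c i bi ≥
    (∑ s, ∑ θ, G.Pm i bi' s θ * γ (φ' s) θ) - G.c i bi'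

/-- Principal's expected utility of an uncorrelated mechanism `(γ, π)` when the agents
best respond with actions `b` and signal-reporting policies `φ`. -/
def AcqGame.Uunc (G : AcqGame) (γ : ∀ i, G.S i → G.Θ → ℝ)
    (π : (∀ i, G.S i) → G.A → ℝ)
    (b : ∀ i, G.B i) (φ : ∀ i, G.S i → G.S i) : ℝ :=
  ∑ s, ∑ θ, G.P b s θ *
    ((∑ a, π (fun i => φ i (s i)) a * G.u a θ) - ∑ i, γ i (φ i (s i)) θ)

/-- Sums over profiles of two bits. -/
theorem sum_bits (f : (Fin 2 → Bool) → ℝ) :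
    ∑ s, f s = f ![true, true] + f ![true, false] + (f ![false, true] + f ![false, false]) := by
  rw [← (finTwoArrowEquiv Bool).symm.sum_comp f, Fintype.sum_prod_type]
  simp [finTwoArrowEquiv]

/-- Joint law of signals and state: if agent `0` exerts effort, the XOR of the two
(individually uninformative) signals reveals the state; otherwise everything is uniform. -/
def xorP (b s : Fin 2 → Bool) (θ : Bool) : ℝ :=
  if b 0 = true then (if xor (s 0) (s 1) = θ then 1/4 else 0) else 1/8

/-- Effort by agent `0` costs `1/8`; everything else is free. -/
def xorCost (i : Fin 2) (b : Bool) : ℝ := if i = 0 ∧ b = true then 1/8 else 0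

/-- The XOR game. -/
def xorGame : AcqGame where
  n := 2
  B := fun _ => Bool
  S := fun _ => Bool
  Θ := Bool
  A := Bool
  c := xorCost
  p := fun _ => 1/2
  P := xorP
  Pm := fun _ _ _ _ => 1/4
  u := fun a θ => if a = θ then 1 else 0
  M := 1
  hM := one_pos
  hc := by
    intro i b
    unfold xorCost
    split_ifs <;> constructor <;> norm_num
  hu := by
    intro a θ
    split_ifs <;> constructor <;> norm_num
  hp0 := by intro _; norm_num
  hp1 := by simp
  hP0 := by
    intro b s θ
    unfold xorP
    split_ifs <;> norm_num
  hPp := by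
    intro b θ
    refine (sum_bits _).trans ?_
    cases θ <;> cases h : b 0 <;> simp [xorP, h] <;> norm_num
  hPm := by
    intro i b si θ
    refine (sum_bits _).trans ?_
    fin_cases i <;> cases si <;> cases θ <;> cases h : b 0 <;> simp [xorP, h] <;> norm_num

/-- Recommend effort to both agents with probability one. -/
def xorMu (b : Fin 2 → Bool) : ℝ := if b 0 = true ∧ b 1 = true then 1 else 0

/-- Pay agent `0` iff the XOR of the reports matches the state. -/
def xorPay (i : Fin 2) (_ : Fin 2 → Bool) (s : Fin 2 → Bool) (θ : Bool) : ℝ :=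
  if i = 0 ∧ xor (s 0) (s 1) = θ then 1/4 else 0

/-- Take the action suggested by the XOR of the reports. -/
def xorPi (_ : Fin 2 → Bool) (s : Fin 2 → Bool) (a : Bool) : ℝ :=
  if xor (s 0) (s 1) = a then 1 else 0

theorem xor_isMech : IsMech (n := 2) (B := fun _ => Bool) (S := fun _ => Bool) (Θ := Bool)
    (A := Bool) 1 xorMu xorPay xorPi := by
  refine ⟨?_, ?_, ?_, ?_, ?_⟩
  · intro b; unfold xorMu; split_ifs <;> norm_num
  · refine (sum_bits _).trans ?_
    simp [xorMu]
  · intro i b s θ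
    unfold xorPay; split_ifs <;> constructor <;> norm_num
  · intro b s a; unfold xorPi; split_ifs <;> norm_num
  · intro b s; simp [xorPi]

theorem sum_mu (g : (Fin 2 → Bool) → ℝ) : ∑ b, xorMu b * g b = g ![true, true] := by
  rw [sum_bits]; simp [xorMu]

theorem fpay_eq (i : Fin 2) : Fpay (n := 2) (B := fun _ => Bool) (S := fun _ => Bool)
    (Θ := Bool) xorP xorMu xorPay i = if i = 0 then 1/4 else 0 := by
  unfold Fpay
  simp only [mul_assoc, ← Finset.mul_sum]
  refine (sum_mu _).trans ((sum_bits _).trans ?_)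
  fin_cases i <;> simp [xorP, xorPay] <;> norm_num

theorem xor_IC : IC (n := 2) (B := fun _ => Bool) (S := fun _ => Bool) (Θ := Bool)
    xorCost xorP xorMu xorPay := by
  intro i φ ψ
  rw [fpay_eq]
  have hc : (∑ b : Fin 2 → Bool, xorMu b * (xorCost i (b i) - xorCost i (φ (b i))))
      = xorCost i true - xorCost i (φ true) := by
    refine (sum_mu _).trans ?_
    fin_cases i <;> rfl
  have hd : FpayDev (n := 2) (B := fun _ => Bool) (S := fun _ => Bool) (Θ := Bool)
      xorP xorMu xorPay i φ ψ ≤ if i = 0 then (if φ true = true then 1/4 else 1/8) else 0 := by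
    unfold FpayDev
    simp only [mul_assoc, ← Finset.mul_sum]
    refine ((sum_mu _).trans (sum_bits _)).trans_le ?_
    fin_cases i
    · cases h : φ true <;> cases h1 : ψ true true <;> cases h2 : ψ true false <;>
        simp [xorP, xorPay, h, h1, h2] <;> norm_num
    · simp [xorPay]
  rw [ge_iff_le]
  refine hc.trans_le (le_trans ?_ (sub_le_sub_left hd _))
  fin_cases i
  · cases h : φ true <;> simp [xorCost, h] <;> norm_num
  · simp [xorCost]

theorem xor_util : Util (n := 2) (B := fun _ => Bool) (S := fun _ => Bool) (Θ := Bool)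
    (A := Bool) xorP (fun a θ => if a = θ then 1 else 0) xorMu xorPay xorPi = 3/4 := by
  unfold Util
  simp only [fpay_eq, mul_assoc, ← Finset.mul_sum]
  have h := (sum_mu (fun b => ∑ s : Fin 2 → Bool, ∑ θ : Bool, xorP b s θ *
    ∑ a : Bool, xorPi b s a * (if a = θ then 1 else 0))).trans (sum_bits _)
  refine (congrArg (· - _) h).trans ?_
  simp [xorP, xorPi]
  norm_num

/-- In an uncorrelated mechanism agent `0` never exerts effort, since it does not change the
joint law of her own signal and the state. -/
theorem xor_noeffort (γ : Bool → Bool → ℝ) (b : Bool) (φ : Bool → Bool)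
    (h : xorGame.IsBR (0 : Fin 2) γ b φ) : b = false := by
  cases b
  · rfl
  · have h' := h false φ
    exfalso
    change (∑ s : Bool, ∑ θ : Bool, (1/4 : ℝ) * γ (φ s) θ) - xorCost 0 true ≥
      (∑ s : Bool, ∑ θ : Bool, (1/4 : ℝ) * γ (φ s) θ) - xorCost 0 false at h'
    have h1 : xorCost 0 true = 1/8 := by simp [xorCost]
    have h2 : xorCost 0 false = 0 := by simp [xorCost]
    rw [h1, h2] at h'
    linarith

theorem xor_Uunc_le (γ : Fin 2 → Bool → Bool → ℝ) (π : (Fin 2 → Bool) → Bool → ℝ)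
    (hγ : ∀ i s θ, 0 ≤ γ i s θ) (hπ : ∀ s, ∑ a, π s a = 1)
    (b : Fin 2 → Bool) (φ : Fin 2 → Bool → Bool) (hb : b 0 = false) :
    xorGame.Uunc γ π b φ ≤ 1/2 := by
  change (∑ s : Fin 2 → Bool, ∑ θ : Bool, xorP b s θ *
    ((∑ a : Bool, π (fun i => φ i (s i)) a * (if a = θ then 1 else 0))
      - ∑ i : Fin 2, γ i (φ i (s i)) θ)) ≤ 1/2
  have key : ∀ s : Fin 2 → Bool, (∑ θ : Bool, xorP b s θ *
    ((∑ a : Bool, π (fun i => φ i (s i)) a * (if a = θ then 1 else 0))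
      - ∑ i : Fin 2, γ i (φ i (s i)) θ)) ≤ 1/8 := by
    intro s
    have h1 := hπ (fun i => φ i (s i))
    have g1 : 0 ≤ ∑ i : Fin 2, γ i (φ i (s i)) true := Finset.sum_nonneg fun i _ => hγ _ _ _
    have g2 : 0 ≤ ∑ i : Fin 2, γ i (φ i (s i)) false := Finset.sum_nonneg fun i _ => hγ _ _ _
    rw [Fintype.sum_bool] at h1
    rw [Fintype.sum_bool, Fintype.sum_bool, Fintype.sum_bool]
    simp only [xorP, hb]
    norm_num
    simp only [Fin.sum_univ_two] at g1 g2
    linarith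
  refine (Finset.sum_le_sum fun s _ => key s).trans ?_
  rw [sum_bits]; norm_num

/-- there exists a game in which no uncorrelated mechanism is optimal. -/
theorem exists_game_where_no_uncorrelated_mechanism_is_optimal :
    ∃ G : AcqGame,
      ∀ (γ : ∀ i, G.S i → G.Θ → ℝ) (π : (∀ i, G.S i) → G.A → ℝ),
        (∀ i s θ, γ i s θ ∈ Set.Icc (0:ℝ) G.M) →
        (∀ s a, 0 ≤ π s a) → (∀ s, (∑ a, π s a) = 1) →
        ∀ (b : ∀ i, G.B i) (φ : ∀ i, G.S i → G.S i),
          (∀ i, G.IsBR i (γ i) (b i) (φ i)) →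
          ∃ (μ' : (∀ i, G.B i) → ℝ)
            (γ' : Fin G.n → (∀ i, G.B i) → (∀ i, G.S i) → G.Θ → ℝ)
            (π' : (∀ i, G.B i) → (∀ i, G.S i) → G.A → ℝ),
            IsMech G.M μ' γ' π' ∧ IC G.c G.P μ' γ' ∧
              G.Uunc γ π b φ < Util G.P G.u μ' γ' π' := by
  refine ⟨xorGame, ?_⟩
  intro γ π hγ _ hπ b φ hBR
  refine ⟨xorMu, xorPay, xorPi, xor_isMech, xor_IC, ?_⟩
  have hb : b (0 : Fin 2) = false := xor_noeffort _ _ _ (hBR (0 : Fin 2))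
  have hU : xorGame.Uunc γ π b φ ≤ 1/2 :=
    xor_Uunc_le γ π (fun i s θ => (hγ i s θ).1) hπ b φ hb
  refine hU.trans_lt (lt_of_lt_of_eq ?_ xor_util.symm)
  norm_num
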